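/- arXiv:2001.03778 — 2 statements merged into one kernel-verified Lean document; each statement's English description precedes it below -/
import Mathlib

section
/- Let 0 < α ≤ 1 and ν ∈ ℝ, and set h₀ := min{e^{−2ν/α}, 1/2}. Then there exists a constant C, depending only on α and ν, such that for all real h with 0 < h ≤ h₀ one has ∫₀^h s^{α−1} |ln s|^ν ds ≤ C · h^α · |ln h|^ν (the integral being a finite Lebesgue integral over (0,h) since α > 0). -/
theorem aux_pt (α ν : ℝ) (hα0 : 0 < α) (h s : ℝ) (hs : 0 < s) (hsh : s < h)
    (h1 : h ≤ Real.exp (-(2 * ν) / α)) (h2 : h ≤ 1 / 2) :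
    s ^ (α - 1) * |Real.log s| ^ ν ≤ (h ^ (α / 2) * |Real.log h| ^ ν) * s ^ (α / 2 - 1) := by
  have hh : 0 < h := hs.trans hsh
  have hlogh : Real.log h < 0 := Real.log_neg hh (by linarith)
  have hlog : Real.log s < Real.log h := Real.log_lt_log hs hsh
  rw [abs_of_neg hlogh, abs_of_neg (hlog.trans hlogh)]
  have hL1 : Real.log h ≤ -(2 * ν) / α := by
    have := Real.log_le_log hh h1
    rwa [Real.log_exp] at this
  rw [le_div_iff₀ hα0] at hL1
  obtain ⟨L, hL⟩ : ∃ L, L = -Real.log h := ⟨_, rfl⟩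
  obtain ⟨l, hl⟩ : ∃ l, l = -Real.log s := ⟨_, rfl⟩
  have hLp : 0 < L := by linarith
  have hlp : 0 < l := by linarith
  have e1 : Real.log h = -L := by linarith
  have e2 : Real.log s = -l := by linarith
  have key : ν * (Real.log l - Real.log L) ≤ α / 2 * (l - L) := by
    have hm : Real.log L ≤ Real.log l := Real.log_le_log hLp (by linarith)
    rcases le_total ν 0 with hν | hν
    · have : ν * (Real.log l - Real.log L) ≤ 0 :=
        mul_nonpos_of_nonpos_of_nonneg hν (by linarith)
      have : 0 ≤ α / 2 * (l - L) := mul_nonneg (by linarith) (by linarith)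
      linarith
    · have h3 : Real.log l - Real.log L ≤ (l - L) / L := by
        rw [← Real.log_div hlp.ne' hLp.ne', sub_div, div_self hLp.ne']
        exact Real.log_le_sub_one_of_pos (by positivity)
      have h4 : ν ≤ α / 2 * L := by rw [e1] at hL1; linarith
      have h5 : 0 ≤ (l - L) / L := div_nonneg (by linarith) hLp.le
      calc _ ≤ ν * ((l - L) / L) := mul_le_mul_of_nonneg_left h3 hν
        _ ≤ (α / 2 * L) * ((l - L) / L) := mul_le_mul_of_nonneg_right h4 h5
        _ = _ := by field_simp
  rw [e1, e2, neg_neg, neg_neg]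
  rw [Real.rpow_def_of_pos hs, Real.rpow_def_of_pos hs, Real.rpow_def_of_pos hh,
    Real.rpow_def_of_pos hlp, Real.rpow_def_of_pos hLp, ← Real.exp_add, ← Real.exp_add,
    ← Real.exp_add, Real.exp_le_exp, e1, e2]
  linarith

/-- For `0 < α ≤ 1` and `ν ∈ ℝ`, with `h₀ = min (exp (-2ν/α)) (1/2)`,
there is a constant `C` (depending only on `α, ν`) such that for all `0 < h ≤ h₀`,
`∫_{(0,h)} s^(α-1) |ln s|^ν ds ≤ C h^α |ln h|^ν`. -/
theorem stmt_0 (α ν : ℝ) (hα0 : 0 < α) (hα1 : α ≤ 1) :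
    ∃ C : ℝ, ∀ h : ℝ, 0 < h → h ≤ min (Real.exp (-(2 * ν) / α)) (1 / 2) →
      (∫ s in Set.Ioo (0 : ℝ) h, s ^ (α - 1) * |Real.log s| ^ ν) ≤
        C * h ^ α * |Real.log h| ^ ν := by
  refine ⟨2 / α, fun h hh hm => ?_⟩
  have h1 := hm.trans (min_le_left _ _)
  have h2 := hm.trans (min_le_right _ _)
  have hi : MeasureTheory.IntegrableOn (fun s : ℝ => s ^ (α / 2 - 1)) (Set.Ioo 0 h) :=
    (intervalIntegral.integrableOn_Ioo_rpow_iff hh).2 (by linarith)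
  calc (∫ s in Set.Ioo (0 : ℝ) h, s ^ (α - 1) * |Real.log s| ^ ν)
      ≤ ∫ s in Set.Ioo (0 : ℝ) h, (h ^ (α / 2) * |Real.log h| ^ ν) * s ^ (α / 2 - 1) := by
        apply MeasureTheory.integral_mono_of_nonneg
        · filter_upwards [MeasureTheory.ae_restrict_mem measurableSet_Ioo] with s hs
          have := hs.1
          simp only [Pi.zero_apply]
          positivity
        · exact hi.const_mul _
        · filter_upwards [MeasureTheory.ae_restrict_mem measurableSet_Ioo] with s hs
          exact aux_pt α ν hα0 h s hs.1 hs.2 h1 h2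
    _ = (h ^ (α / 2) * |Real.log h| ^ ν) * (h ^ (α / 2) / (α / 2)) := by
        rw [MeasureTheory.integral_const_mul, ← MeasureTheory.integral_Ioc_eq_integral_Ioo,
          ← intervalIntegral.integral_of_le hh.le, integral_rpow (Or.inl (by linarith)),
          sub_add_cancel, Real.zero_rpow (by positivity), sub_zero]
    _ = 2 / α * (h ^ (α / 2) * h ^ (α / 2)) * |Real.log h| ^ ν := by field_simp
    _ = 2 / α * h ^ α * |Real.log h| ^ ν := by rw [← Real.rpow_add hh, add_halves]
    _ ≤ _ := le_rfl
end

section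
/- Let 0 < α < 1 and ν ∈ ℝ, and set h₀ := min{e^{−2ν/α}, e^{2ν/(1−α)}, 1/2}. Then there exists a constant C, depending only on α and ν, such that for all real h with 0 < h ≤ h₀ one has ∫_h^{h₀} s^{α−2} |ln s|^ν ds ≤ C · h^{α−1} · |ln h|^ν. -/
theorem aux_pt_s1 (b ν L M : ℝ) (hb : 0 < b) (hL : 0 < L) (hLM : L ≤ M)
    (h : -(2 * ν) ≤ b * L) :
    Real.exp (b / 2 * L) * L ^ ν ≤ Real.exp (b / 2 * M) * M ^ ν := by
  have hM : 0 < M := lt_of_lt_of_le hL hLM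
  rw [Real.rpow_def_of_pos hL, Real.rpow_def_of_pos hM, ← Real.exp_add, ← Real.exp_add]
  apply Real.exp_le_exp.mpr
  have h1 : Real.log L ≤ Real.log M := Real.log_le_log hL hLM
  have h2 : Real.log M - Real.log L ≤ M / L - 1 := by
    rw [← Real.log_div hM.ne' hL.ne']
    exact Real.log_le_sub_one_of_pos (by positivity)
  rcases le_total 0 ν with hν | hν
  · nlinarith [mul_nonneg hν (sub_nonneg.mpr h1), mul_nonneg hb.le (sub_nonneg.mpr hLM)]
  · have h3 : (-ν) * (Real.log M - Real.log L) ≤ (-ν) * (M / L - 1) :=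
      mul_le_mul_of_nonneg_left h2 (by linarith)
    have h4 : (-ν) * (M / L - 1) ≤ b / 2 * L * (M / L - 1) := by
      apply mul_le_mul_of_nonneg_right (by linarith)
      rw [sub_nonneg, le_div_iff₀ hL]; linarith
    have h5 : b / 2 * L * (M / L - 1) = b / 2 * (M - L) := by field_simp
    nlinarith

/-- For `0 < α < 1` and `ν ∈ ℝ`, with
`h₀ = min (exp (-2ν/α)) (min (exp (2ν/(1-α))) (1/2))`, there is a constant `C`
(depending only on `α, ν`) such that for all `0 < h ≤ h₀`,
`∫_{(h,h₀)} s^(α-2) |ln s|^ν ds ≤ C h^(α-1) |ln h|^ν`. -/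
theorem stmt_1 (α ν : ℝ) (hα0 : 0 < α) (hα1 : α < 1) :
    ∃ C : ℝ, ∀ h : ℝ, 0 < h →
      h ≤ min (Real.exp (-(2 * ν) / α)) (min (Real.exp (2 * ν / (1 - α))) (1 / 2)) →
      (∫ s in Set.Ioo h
          (min (Real.exp (-(2 * ν) / α)) (min (Real.exp (2 * ν / (1 - α))) (1 / 2))),
        s ^ (α - 2) * |Real.log s| ^ ν) ≤ C * h ^ (α - 1) * |Real.log h| ^ ν := by
  refine ⟨2 / (1 - α), fun h h0 hle => ?_⟩
  set H := min (Real.exp (-(2 * ν) / α)) (min (Real.exp (2 * ν / (1 - α))) (1 / 2)) with hH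
  have hb : 0 < 1 - α := by linarith
  have hH1 : H ≤ Real.exp (2 * ν / (1 - α)) := (min_le_right _ _).trans (min_le_left _ _)
  have hH2 : H ≤ 1 / 2 := (min_le_right _ _).trans (min_le_right _ _)
  have hlt : -1 - (1 - α) / 2 < -1 := by linarith
  set K := h ^ (-((1 - α) / 2)) * |Real.log h| ^ ν with hK
  have hK0 : 0 ≤ K := by positivity
  have hint : MeasureTheory.IntegrableOn (fun s : ℝ => s ^ (-1 - (1 - α) / 2)) (Set.Ioi h) :=
    integrableOn_Ioi_rpow_of_lt hlt h0
  have hexp : ∀ s : ℝ, 0 < s → s ≤ H → s ^ (-((1 - α) / 2)) * |Real.log s| ^ ν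
      = Real.exp ((1 - α) / 2 * (-Real.log s)) * (-Real.log s) ^ ν := by
    intro s hs hsH
    have : Real.log s < 0 := Real.log_neg hs (by linarith)
    rw [abs_of_neg this, Real.rpow_def_of_pos hs]
    congr 2
    ring
  have hpt : ∀ s ∈ Set.Ioo h H, s ^ (α - 2) * |Real.log s| ^ ν
      ≤ s ^ (-1 - (1 - α) / 2) * K := by
    intro s hs
    have hs0 : 0 < s := h0.trans hs.1
    have e : α - 2 = (-1 - (1 - α) / 2) + (-((1 - α) / 2)) := by ring
    rw [e, Real.rpow_add hs0, mul_assoc]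
    apply mul_le_mul_of_nonneg_left _ (by positivity)
    rw [hK, hexp s hs0 hs.2.le, hexp h h0 hle]
    have hl : Real.log s < 0 := Real.log_neg hs0 (by linarith [hs.2])
    apply aux_pt_s1 _ _ _ _ hb (by linarith)
    · linarith [Real.log_le_log h0 hs.1.le]
    · have : Real.log s ≤ 2 * ν / (1 - α) := by
        rw [Real.log_le_iff_le_exp hs0]; linarith [hs.2]
      rw [le_div_iff₀ hb] at this
      linarith
  have hint2 : MeasureTheory.IntegrableOn (fun s : ℝ => s ^ (-1 - (1 - α) / 2) * K)
      (Set.Ioi h) := hint.mul_const K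
  have hpos : ∀ s ∈ Set.Ioi h, 0 ≤ s ^ (-1 - (1 - α) / 2) * K := by
    intro s hs
    have : 0 < s := h0.trans hs
    positivity
  calc _ ≤ ∫ s in Set.Ioo h H, s ^ (-1 - (1 - α) / 2) * K := by
        apply MeasureTheory.integral_mono_of_nonneg
        · filter_upwards [MeasureTheory.ae_restrict_mem measurableSet_Ioo] with s hs
          have : 0 < s := h0.trans hs.1
          simp only [Pi.zero_apply]
          positivity
        · exact hint2.mono_set Set.Ioo_subset_Ioi_self
        · filter_upwards [MeasureTheory.ae_restrict_mem measurableSet_Ioo] with s hs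
          exact hpt s hs
    _ ≤ ∫ s in Set.Ioi h, s ^ (-1 - (1 - α) / 2) * K := by
        apply MeasureTheory.setIntegral_mono_set hint2
        · filter_upwards [MeasureTheory.ae_restrict_mem measurableSet_Ioi] with s hs
          exact hpos s hs
        · exact Set.Ioo_subset_Ioi_self.eventuallyLE
    _ = 2 / (1 - α) * h ^ (α - 1) * |Real.log h| ^ ν := by
        rw [MeasureTheory.integral_mul_const, integral_Ioi_rpow_of_lt hlt h0, hK]
        have e1 : -1 - (1 - α) / 2 + 1 = -((1 - α) / 2) := by ring
        have e2 : α - 1 = -((1 - α) / 2) + -((1 - α) / 2) := by ring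
        rw [e1, e2, Real.rpow_add h0]
        field_simp
end
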